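/- Let O be an orbit of the δ-twisted partial conjugation action of W_J on W that contains an element of W^J, and let v ∈ O. Then the following are equivalent: (1) v is minimal in O with respect to the restriction of the Bruhat order, i.e. there is no v' ∈ O with v' < v; (2) v is an element of minimal length in O, i.e. ℓ(v) ≤ ℓ(v') for all v' ∈ O. -/

import Mathlib

open CoxeterSystem

variable {B : Type*} [Finite B] {W : Type*} [Group W] {M : CoxeterMatrix B}

namespace PartialConjugation

/-- The standard parabolic subgroup `W_J` of `W`, generated by the simple
reflections indexed by `J`. -/
def parab (cs : CoxeterSystem M W) (J : Set B) : Subgroup W :=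
  Subgroup.closure (cs.simple '' J)

/-- The simple reflection `s_j` (for `j ∈ J`), viewed as an element of `W_J`. -/
def sJ (cs : CoxeterSystem M W) (J : Set B) (j : B) (hj : j ∈ J) : parab cs J :=
  ⟨cs.simple j, Subgroup.subset_closure ⟨j, hj, rfl⟩⟩

/-- `w ∈ W^J`: `w` is a minimal length representative of its left coset `w W_J`. -/
def IsMinRep (cs : CoxeterSystem M W) (J : Set B) (w : W) : Prop :=
  ∀ v ∈ parab cs J, cs.length w ≤ cs.length (w * v)

variable (cs : CoxeterSystem M W) (J J' : Set B) (δ : parab cs J ≃* parab cs J')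

/-- `δ` carries the set of simple reflections indexed by `J` onto the set of
simple reflections indexed by `J'`. -/
def MapsSimples : Prop :=
  (∀ j, ∀ hj : j ∈ J, ∃ j' ∈ J', (δ (sJ cs J j hj) : W) = cs.simple j') ∧
  (∀ j' ∈ J', ∃ j, ∃ hj : j ∈ J, (δ (sJ cs J j hj) : W) = cs.simple j')

/-- `K` is a `w`-special subset of `J`. -/
def WSpecial (w : W) (K : Set B) : Prop :=
  K ⊆ J ∧ ∀ k ∈ K, ∃ j, ∃ hjJ : j ∈ J, j ∈ K ∧
    w * cs.simple k * w⁻¹ = (δ (sJ cs J j hjJ) : W)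

/-- The set `I(J, w, δ)`: the union of all `w`-special subsets of `J`. -/
def Iset (w : W) : Set B := ⋃₀ {K | WSpecial cs J J' δ w K}

/-- The set `W_J ·_δ V = {δ(u) v u⁻¹ : u ∈ W_J, v ∈ V}`. -/
def orbSet (V : Set W) : Set W :=
  {x | ∃ u : parab cs J, ∃ v ∈ V, x = (δ u : W) * v * (u : W)⁻¹}

/-- The orbit of `x` under the `δ`-twisted partial conjugation action of `W_J`. -/
def orbitOf (x : W) : Set W := orbSet cs J J' δ {x}

/-- The coset `w W_{I(J,w,δ)}`. -/
def coset (w : W) : Set W :=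
  {x | ∃ v ∈ parab cs (Iset cs J J' δ w), x = w * v}

/-- Elementary step `v →_i v'` of `δ`-twisted conjugation: `v' = δ(s_i) v s_i`
with `i ∈ J` and `ℓ(v') ≤ ℓ(v)`. -/
def StepRel (v v' : W) : Prop :=
  ∃ i, ∃ hi : i ∈ J, v' = (δ (sJ cs J i hi) : W) * v * cs.simple i ∧
    cs.length v' ≤ cs.length v

/-- The relation `v →_{J,δ} v'`. -/
def ToRel : W → W → Prop := Relation.ReflTransGen (StepRel cs J J' δ)

/-- The relation `v ≈_{J,δ} v'`. -/
def Approx (v v' : W) : Prop := ToRel cs J J' δ v v' ∧ ToRel cs J J' δ v' v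

/-- The Bruhat order on `W`. -/
def bruhatLE (cs : CoxeterSystem M W) : W → W → Prop :=
  Relation.ReflTransGen
    (fun a b => ∃ t, cs.IsReflection t ∧ b = a * t ∧ cs.length a < cs.length b)

/-- The set of minimal length elements in the orbit of `x`. -/
def orbMin (x : W) : Set W :=
  {y ∈ orbitOf cs J J' δ x | ∀ z ∈ orbitOf cs J J' δ x, cs.length y ≤ cs.length z}

/-!
Let `w ∈ W^J` lie in the orbit. Since `ℓ (w u⁻¹) = ℓ w + ℓ u` and `ℓ (δ u) ≤ ℓ u` for `u ∈ W_J`,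
the length of `w` is minimal in the orbit, so it suffices to find below each orbit element
`δ(u) w u⁻¹` in the Bruhat order an orbit element of length at most `ℓ w`. Take a reduced word `L`
for `u` and multiply `w u⁻¹` on the left by the letters of `δ(L)`, from the last to the first,
skipping those that would increase the length. By the lifting property this procedure is monotone
for the Bruhat order, and its result lies below `δ(u) w u⁻¹`. If no letter is skipped, the result is
`δ(u) w u⁻¹` itself and has length `ℓ w`. Otherwise the letters that are kept come from a shorter
reduced word `L'` for some `u'`, and `w u'⁻¹ ≤ w u⁻¹` by the subword property, so by monotonicity
`L` can be replaced by `L'`.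
-/

section

variable {B : Type*} {M : CoxeterMatrix B} (cs : CoxeterSystem M W)

section InversionParity

theorem drop_leftInvSeq_alternatingWord (i j : B) :
    (cs.leftInvSeq (alternatingWord i j (2 * M i j))).drop (M i j) =
      (cs.leftInvSeq (alternatingWord i j (2 * M i j))).take (M i j) := by
  have length_eq : (cs.leftInvSeq (alternatingWord i j (2 * M i j))).length = 2 * M i j := by simp
  refine List.ext_getElem (by rw [List.length_drop, List.length_take]; lia) fun k hk _ => ?_
  rw [List.length_drop, length_eq] at hk
  have odd_div (n : ℕ) : (2 * n + 1) / 2 = n := by lia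
  rw [List.getElem_drop, List.getElem_take,
    cs.getElem_leftInvSeq_alternatingWord i j _ _ (by lia),
    cs.getElem_leftInvSeq_alternatingWord i j _ _ (by lia),
    prod_alternatingWord_eq_mul_pow, prod_alternatingWord_eq_mul_pow, odd_div, odd_div,
    pow_add, cs.simple_mul_simple_pow', one_mul]
  simp

variable [DecidableEq W]

theorem even_count_leftInvSeq_alternatingWord (i j : B) (t : W) :
    Even ((cs.leftInvSeq (alternatingWord i j (2 * M i j))).count t) := by
  rw [← List.take_append_drop (M i j) (cs.leftInvSeq _), List.count_append,
    drop_leftInvSeq_alternatingWord]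
  exact Even.add_self _

/-- The involution `(t, ε) ↦ (s_i t s_i, ε + [t = s_i])` of `W × ZMod 2`. These involutions satisfy
the Coxeter relations, and the second coordinate of the resulting action of `W` counts inversions
modulo 2. All of `W` is used instead of the set of reflections. -/
def signedConj (i : B) : Equiv.Perm (W × ZMod 2) :=
  Function.Involutive.toPerm
    (fun p => (cs.simple i * p.1 * cs.simple i, p.2 + if p.1 = cs.simple i then 1 else 0)) <| by
    rintro ⟨t, ε⟩
    have conj_eq_iff : cs.simple i * t * cs.simple i = cs.simple i ↔ t = cs.simple i := by
      rw [mul_eq_right, ← cs.simple_mul_simple_self i, mul_right_inj]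
    simp only [conj_eq_iff, add_assoc, CharTwo.add_self_eq_zero, add_zero]
    simp [mul_assoc]

theorem signedConj_apply (i : B) (t : W) (ε : ZMod 2) :
    signedConj cs i (t, ε) =
      (cs.simple i * t * cs.simple i, ε + if t = cs.simple i then 1 else 0) :=
  rfl

theorem prod_map_signedConj_apply (ω : List B) (t : W) (ε : ZMod 2) :
    (ω.map (signedConj cs)).prod (t, ε) =
      (cs.wordProd ω * t * (cs.wordProd ω)⁻¹, ε + (cs.rightInvSeq ω).count t) := by
  induction ω with
  | nil => simp
  | cons i ω ih =>
    have conj_eq_iff : cs.wordProd ω * t * (cs.wordProd ω)⁻¹ = cs.simple i ↔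
        (cs.wordProd ω)⁻¹ * cs.simple i * cs.wordProd ω = t := by
      rw [mul_inv_eq_iff_eq_mul, mul_assoc, inv_mul_eq_iff_eq_mul, eq_comm]
    simp only [List.map_cons, List.prod_cons, Equiv.Perm.mul_apply, ih, signedConj_apply,
      conj_eq_iff, rightInvSeq, List.count_cons, beq_iff_eq, cs.wordProd_cons]
    simp [mul_assoc, add_assoc]

theorem signedConj_mul_pow (i j : B) (n : ℕ) :
    (signedConj cs i * signedConj cs j) ^ n =
      ((alternatingWord j i (2 * n)).reverse.map (signedConj cs)).prod := by
  induction n with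
  | zero => simp [alternatingWord]
  | succ n ih => simp [pow_succ', ih, mul_add, alternatingWord, mul_assoc]

theorem isLiftable_signedConj : M.IsLiftable (signedConj cs) := by
  intro i j
  ext1 ⟨t, ε⟩
  have wordProd_eq_one : cs.wordProd (alternatingWord j i (2 * M i j)) = 1 := by
    simp [prod_alternatingWord_eq_mul_pow]
  have count_eq_zero :
      ((cs.leftInvSeq (alternatingWord j i (2 * M i j))).count t : ZMod 2) = 0 := by
    rw [← M.symmetric j i]
    exact (ZMod.natCast_eq_zero_iff_even).2 (even_count_leftInvSeq_alternatingWord cs j i t)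
  rw [signedConj_mul_pow, prod_map_signedConj_apply, cs.rightInvSeq_reverse, List.count_reverse,
    count_eq_zero, cs.wordProd_reverse, wordProd_eq_one]
  simp

/-- The number of right inversions `t` of `w` counted modulo 2 along any word for `w`: it is `1` if
the reflection `t` is a right inversion of `w`, and `0` otherwise. -/
def inversionParity (w t : W) : ZMod 2 :=
  (cs.lift ⟨signedConj cs, isLiftable_signedConj cs⟩ w (t, 0)).2

theorem lift_signedConj_wordProd (ω : List B) :
    cs.lift ⟨signedConj cs, isLiftable_signedConj cs⟩ (cs.wordProd ω) =
      (ω.map (signedConj cs)).prod := by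
  simp [wordProd, map_list_prod, Function.comp_def]

theorem inversionParity_wordProd (ω : List B) (t : W) :
    inversionParity cs (cs.wordProd ω) t = (cs.rightInvSeq ω).count t := by
  simp [inversionParity, lift_signedConj_wordProd, prod_map_signedConj_apply]

theorem lift_signedConj_apply (w t : W) (ε : ZMod 2) :
    cs.lift ⟨signedConj cs, isLiftable_signedConj cs⟩ w (t, ε) =
      (w * t * w⁻¹, ε + inversionParity cs w t) := by
  obtain ⟨ω, rfl⟩ := cs.wordProd_surjective w
  rw [lift_signedConj_wordProd, prod_map_signedConj_apply, inversionParity_wordProd]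

theorem inversionParity_mul (x y t : W) :
    inversionParity cs (x * y) t =
      inversionParity cs x (y * t * y⁻¹) + inversionParity cs y t := by
  rw [inversionParity, map_mul, Equiv.Perm.mul_apply, lift_signedConj_apply, lift_signedConj_apply,
    zero_add, add_comm]

theorem inversionParity_one (t : W) : inversionParity cs 1 t = 0 := by
  simp [inversionParity]

theorem inversionParity_simple (i : B) (t : W) :
    inversionParity cs (cs.simple i) t = if t = cs.simple i then 1 else 0 := by
  simp [inversionParity, signedConj_apply]

theorem inversionParity_self {t : W} (ht : cs.IsReflection t) : inversionParity cs t t = 1 := by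
  obtain ⟨u, i, rfl⟩ := ht
  have conj_eq : u⁻¹ * (u * cs.simple i * u⁻¹) * u⁻¹⁻¹ = cs.simple i := by group
  have cancel : inversionParity cs u (cs.simple i) +
      inversionParity cs u⁻¹ (u * cs.simple i * u⁻¹) = 0 := by
    rw [← inversionParity_one cs (u * cs.simple i * u⁻¹), ← mul_inv_cancel u, inversionParity_mul,
      conj_eq]
  rw [inversionParity_mul, inversionParity_mul, conj_eq, inversionParity_simple, if_pos rfl,
    mul_inv_cancel_right]
  linear_combination cancel

theorem isRightInversion_iff_inversionParity_eq_one {w t : W} (ht : cs.IsReflection t) :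
    cs.IsRightInversion w t ↔ inversionParity cs w t = 1 := by
  have isRightInversion_of_parity {x : W} (hx : inversionParity cs x t = 1) :
      cs.IsRightInversion x t := by
    obtain ⟨ω, hω, rfl⟩ := cs.exists_isReduced x
    refine cs.isRightInversion_of_mem_rightInvSeq hω ?_
    by_contra hmem
    simp [inversionParity_wordProd, List.count_eq_zero_of_not_mem hmem] at hx
  refine ⟨fun hwt => ?_, isRightInversion_of_parity⟩
  by_contra hne
  refine ht.not_isRightInversion_mul_left_iff.2 hwt (isRightInversion_of_parity ?_)
  rw [inversionParity_mul, inversionParity_self cs ht, mul_inv_cancel_right]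
  revert hne
  generalize inversionParity cs w t = ε
  decide +revert

end InversionParity

section Inversion

variable {cs}

theorem isRightInversion_or_of_mul {x y t : W} (h : cs.IsRightInversion (x * y) t) :
    cs.IsRightInversion x (y * t * y⁻¹) ∨ cs.IsRightInversion y t := by
  classical
  have ht := h.1
  rw [isRightInversion_iff_inversionParity_eq_one cs ht, inversionParity_mul] at h
  rw [isRightInversion_iff_inversionParity_eq_one cs ht,
    isRightInversion_iff_inversionParity_eq_one cs (ht.conj y)]
  generalize inversionParity cs x (y * t * y⁻¹) = ε, inversionParity cs y t = ε' at h ⊢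
  decide +revert

theorem eq_simple_of_isRightInversion_simple {i : B} {t : W}
    (h : cs.IsRightInversion (cs.simple i) t) : t = cs.simple i := by
  have length_eq_zero : cs.length (cs.simple i * t) = 0 := by
    have := h.2
    rw [cs.length_simple] at this
    lia
  rw [cs.length_eq_zero_iff, mul_eq_one_iff_inv_eq, cs.inv_simple] at length_eq_zero
  exact length_eq_zero.symm

/-- The strong exchange property. -/
theorem mem_rightInvSeq_of_isRightInversion {ω : List B} {t : W}
    (h : cs.IsRightInversion (cs.wordProd ω) t) : t ∈ cs.rightInvSeq ω := by
  classical
  rw [isRightInversion_iff_inversionParity_eq_one cs h.1, inversionParity_wordProd] at h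
  by_contra hmem
  simp [List.count_eq_zero_of_not_mem hmem] at h

end Inversion

section Bruhat

variable {cs}

theorem bruhatLE_mul_of_length_lt {x t : W} (ht : cs.IsReflection t)
    (h : cs.length x < cs.length (x * t)) : bruhatLE cs x (x * t) :=
  .single ⟨t, ht, rfl, h⟩

theorem bruhatLE_reflection_mul_of_length_lt {x t : W} (ht : cs.IsReflection t)
    (h : cs.length x < cs.length (t * x)) : bruhatLE cs x (t * x) := by
  have mul_conj : x * (x⁻¹ * t * x⁻¹⁻¹) = t * x := by group
  rw [← mul_conj] at h ⊢
  exact bruhatLE_mul_of_length_lt (ht.conj x⁻¹) h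

theorem bruhatLE_inv {x y : W} (h : bruhatLE cs x y) : bruhatLE cs x⁻¹ y⁻¹ := by
  induction h with
  | refl => exact .refl
  | tail _ hedge ih =>
    obtain ⟨t, ht, rfl, hlt⟩ := hedge
    rw [← cs.length_inv, ← cs.length_inv (_ * t), mul_inv_rev, ht.inv] at hlt
    rw [mul_inv_rev, ht.inv]
    exact ih.trans (bruhatLE_reflection_mul_of_length_lt ht hlt)

theorem eq_or_length_lt_of_bruhatLE {x y : W} (h : bruhatLE cs x y) :
    x = y ∨ cs.length x < cs.length y := by
  induction h with
  | refl => exact .inl rfl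
  | tail _ hedge ih =>
    obtain ⟨t, -, rfl, hlt⟩ := hedge
    rcases ih with rfl | hlt'
    · exact .inr hlt
    · exact .inr (hlt'.trans hlt)

theorem length_simple_mul_lt_or_eq {x t : W} (i : B) (ht : cs.IsReflection t)
    (h : cs.length x < cs.length (x * t)) :
    cs.length (cs.simple i * x) < cs.length (cs.simple i * (x * t)) ∨ x * t = cs.simple i * x := by
  refine or_iff_not_imp_left.2 fun hnlt => ?_
  have hne := ht.length_mul_left_ne (cs.simple i * x)
  rw [mul_assoc] at hne
  have hinv : cs.IsRightInversion (cs.simple i * x) t :=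
    ⟨ht, by rw [mul_assoc]; lia⟩
  rcases isRightInversion_or_of_mul hinv with hsimple | hx
  · rw [← eq_simple_of_isRightInversion_simple hsimple, inv_mul_cancel_right]
  · exact absurd hx.2 h.not_gt

/-- The lifting property. -/
theorem bruhatLE_simple_mul_or {x y : W} (i : B) (h : bruhatLE cs x y) :
    bruhatLE cs (cs.simple i * x) (cs.simple i * y) ∨
      bruhatLE cs x (cs.simple i * y) ∧ bruhatLE cs (cs.simple i * x) y := by
  induction h with
  | refl => exact .inl .refl
  | @tail y _ hxy hedge ih =>
    obtain ⟨t, ht, rfl, hlt⟩ := hedge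
    have hyt := bruhatLE_mul_of_length_lt ht hlt
    rcases length_simple_mul_lt_or_eq i ht hlt with hlt' | heq
    · rw [← mul_assoc] at hlt' ⊢
      have hsyt := bruhatLE_mul_of_length_lt ht hlt'
      exact ih.imp (·.trans hsyt) fun h => ⟨h.1.trans hsyt, h.2.trans hyt⟩
    · rw [heq, cs.simple_mul_simple_cancel_left]
      exact (ih.imp (⟨hxy, ·⟩) And.right).symm

theorem bruhatLE_simple_mul_simple_mul {x y : W} {i : B} (h : bruhatLE cs x y)
    (hy : cs.length y < cs.length (cs.simple i * y)) :
    bruhatLE cs (cs.simple i * x) (cs.simple i * y) :=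
  (bruhatLE_simple_mul_or i h).elim id fun h =>
    h.2.trans (bruhatLE_reflection_mul_of_length_lt (cs.isReflection_simple i) hy)

theorem bruhatLE_wordProd_mul_of_sublist {L' L : List B} {x : W} (hsub : L'.Sublist L)
    (hlen : cs.length (cs.wordProd L * x) = L.length + cs.length x) :
    bruhatLE cs (cs.wordProd L' * x) (cs.wordProd L * x) := by
  have split {i : B} {L : List B}
      (h : cs.length (cs.wordProd (i :: L) * x) = (i :: L).length + cs.length x) :
      cs.length (cs.wordProd L * x) = L.length + cs.length x ∧
        cs.length (cs.wordProd L * x) < cs.length (cs.simple i * (cs.wordProd L * x)) := by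
    rw [wordProd_cons, mul_assoc, List.length_cons] at h
    have hle := cs.length_mul_le (cs.wordProd L) x
    have hL := cs.length_wordProd_le L
    have hi := cs.length_simple_mul (cs.wordProd L * x) i
    lia
  induction hsub with
  | slnil => exact .refl
  | cons i _ ih =>
    rw [wordProd_cons, mul_assoc]
    exact (ih (split hlen).1).trans
      (bruhatLE_reflection_mul_of_length_lt (cs.isReflection_simple i) (split hlen).2)
  | cons_cons i _ ih =>
    rw [wordProd_cons, wordProd_cons, mul_assoc, mul_assoc]
    exact bruhatLE_simple_mul_simple_mul (ih (split hlen).1) (split hlen).2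

end Bruhat

section Descend

open Classical in
/-- The Bruhat-smaller of `x` and `s_i x`. -/
noncomputable def descend (i : B) (x : W) : W :=
  if cs.length (cs.simple i * x) < cs.length x then cs.simple i * x else x

/-- The result of multiplying `x` on the left by the letters of `L`, from the last to the first,
skipping each letter that would increase the length. -/
noncomputable def descendWord (L : List B) (x : W) : W :=
  L.foldr (descend cs) x

theorem descendWord_cons (i : B) (L : List B) (x : W) :
    descendWord cs (i :: L) x = descend cs i (descendWord cs L x) :=
  rfl

theorem descend_bruhatLE (i : B) (x : W) : bruhatLE cs (descend cs i x) x := by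
  unfold descend
  split_ifs with h
  · simpa using bruhatLE_reflection_mul_of_length_lt (cs.isReflection_simple i)
      (x := cs.simple i * x) (by simpa using h)
  · exact .refl

theorem descend_bruhatLE_simple_mul (i : B) (x : W) :
    bruhatLE cs (descend cs i x) (cs.simple i * x) := by
  unfold descend
  split_ifs with h
  · exact .refl
  · have hi := cs.length_simple_mul x i
    exact bruhatLE_reflection_mul_of_length_lt (cs.isReflection_simple i) (by lia)

theorem descend_eq_or (i : B) (x : W) : descend cs i x = cs.simple i * x ∨ descend cs i x = x :=
  ite_eq_or_eq _ _ _

variable {cs}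

theorem descend_mono (i : B) {x y : W} (h : bruhatLE cs x y) :
    bruhatLE cs (descend cs i x) (descend cs i y) := by
  rcases descend_eq_or cs i y with heq | heq <;> rw [heq]
  · rcases bruhatLE_simple_mul_or i h with h' | ⟨h', -⟩
    · exact (descend_bruhatLE_simple_mul cs i x).trans h'
    · exact (descend_bruhatLE cs i x).trans h'
  · exact (descend_bruhatLE cs i x).trans h

theorem descendWord_mono (L : List B) {x y : W} (h : bruhatLE cs x y) :
    bruhatLE cs (descendWord cs L x) (descendWord cs L y) := by
  induction L with
  | nil => exact h
  | cons i L ih => exact descend_mono i ih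

variable (cs)

theorem descendWord_bruhatLE_wordProd_mul (L : List B) (x : W) :
    bruhatLE cs (descendWord cs L x) (cs.wordProd L * x) := by
  induction L with
  | nil => simpa using .refl
  | cons i L ih =>
    rw [wordProd_cons, mul_assoc]
    exact (descend_mono i ih).trans (descend_bruhatLE_simple_mul cs i _)

theorem exists_sublist_descendWord_eq (L : List B) (x : W) :
    ∃ L', L'.Sublist L ∧ descendWord cs L x = cs.wordProd L' * x ∧
      descendWord cs L' x = descendWord cs L x ∧
      cs.length (descendWord cs L x) + L'.length = cs.length x := by
  induction L with
  | nil => exact ⟨[], by simp [descendWord]⟩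
  | cons i L ih =>
    obtain ⟨L', hsub, hprod, hdesc, hlen⟩ := ih
    by_cases hlt : cs.length (cs.simple i * descendWord cs L x) < cs.length (descendWord cs L x)
    · have heq : descendWord cs (i :: L) x = cs.simple i * descendWord cs L x := if_pos hlt
      refine ⟨i :: L', hsub.cons_cons i, ?_, by rw [descendWord_cons, hdesc, descendWord_cons], ?_⟩
      · rw [heq, hprod, wordProd_cons, mul_assoc]
      · have hi := cs.length_simple_mul (descendWord cs L x) i
        rw [heq, List.length_cons]
        lia
    · have heq : descendWord cs (i :: L) x = descendWord cs L x := if_neg hlt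
      exact ⟨L', hsub.cons i, by rw [heq, hprod], by rw [heq, hdesc], by rw [heq, hlen]⟩

end Descend

section Parabolic

variable (J : Set B)

/-- The element of `W_J` represented by a word in the letters `J`. -/
def parabProd (L : List J) : parab cs J :=
  (L.map fun j : J => sJ cs J j j.2).prod

theorem coe_parabProd (L : List J) :
    (parabProd cs J L : W) = cs.wordProd (L.map Subtype.val) := by
  simp [parabProd, wordProd, sJ, Function.comp_def]

theorem parabProd_append_singleton (L : List J) (j : J) :
    parabProd cs J (L ++ [j]) = parabProd cs J L * sJ cs J j j.2 := by
  simp [parabProd]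

theorem length_parabProd_le (L : List J) : cs.length (parabProd cs J L : W) ≤ L.length := by
  simpa [coe_parabProd] using cs.length_wordProd_le (L.map Subtype.val)

variable {cs J}

theorem exists_parabProd_eq_mul_simple {L : List J} {j : J}
    (h : cs.length (parabProd cs J L * cs.simple j) < cs.length (parabProd cs J L : W)) :
    ∃ L', parabProd cs J L' = parabProd cs J L * sJ cs J j j.2 ∧ L'.length + 1 = L.length := by
  have hinv : cs.IsRightInversion (parabProd cs J L : W) (cs.simple j) :=
    ⟨cs.isReflection_simple j, h⟩
  rw [coe_parabProd] at hinv
  obtain ⟨n, hn, hget⟩ := List.getElem_of_mem (mem_rightInvSeq_of_isRightInversion hinv)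
  have hn' : n < L.length := by simpa using hn
  refine ⟨L.eraseIdx n, Subtype.ext ?_, by rw [List.length_eraseIdx_of_lt hn']; lia⟩
  rw [coe_parabProd, ← List.eraseIdx_map, ← wordProd_mul_getD_rightInvSeq,
    List.getD_eq_getElem _ _ hn, hget, Subgroup.coe_mul, coe_parabProd, sJ]

theorem exists_parabProd_eq (u : parab cs J) :
    ∃ L : List J, parabProd cs J L = u ∧ cs.length (u : W) = L.length := by
  have step (u : parab cs J) (j : J)
      (hu : ∃ L, parabProd cs J L = u ∧ cs.length (u : W) = L.length) :
      ∃ L, parabProd cs J L = u * sJ cs J j j.2 ∧ cs.length (u * cs.simple j) = L.length := by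
    obtain ⟨L, rfl, hlen⟩ := hu
    rcases cs.length_mul_simple (parabProd cs J L) j with hj | hj
    · exact ⟨L ++ [j], parabProd_append_singleton cs J L j, by simp [hj, hlen]⟩
    · have hlt : cs.length (parabProd cs J L * cs.simple j) < cs.length (parabProd cs J L : W) := by
        lia
      obtain ⟨L', hL', hlen'⟩ := exists_parabProd_eq_mul_simple hlt
      exact ⟨L', hL', by lia⟩
  obtain ⟨u, hu⟩ := u
  induction hu using Subgroup.closure_induction_right with
  | one => exact ⟨[], Subtype.ext (by simp [parabProd]), by simp⟩
  | mul_right u hu _ hs ih =>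
    obtain ⟨j, hj, rfl⟩ := hs
    exact step ⟨u, hu⟩ ⟨j, hj⟩ ih
  | mul_inv_cancel u hu _ hs ih =>
    obtain ⟨j, hj, rfl⟩ := hs
    simp only [cs.inv_simple]
    exact step ⟨u, hu⟩ ⟨j, hj⟩ ih

theorem IsMinRep.length_mul_parabProd {w : W} (hw : IsMinRep cs J w) {L : List J}
    (hL : cs.length (parabProd cs J L : W) = L.length) :
    cs.length (w * parabProd cs J L) = cs.length w + L.length := by
  induction L using List.reverseRecOn with
  | nil => simp [parabProd]
  | append_singleton L j ih =>
    rw [parabProd_append_singleton, Subgroup.coe_mul, List.length_append,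
      List.length_singleton] at hL ⊢
    simp only [sJ] at hL ⊢
    set u := parabProd cs J L
    have hu : cs.length (u : W) = L.length := by
      have := cs.length_mul_simple u j
      have := length_parabProd_le cs J L
      lia
    rw [← mul_assoc]
    have not_isRightInversion : ¬ cs.IsRightInversion (w * u) (cs.simple j) := fun h => by
      rcases isRightInversion_or_of_mul h with hconj | hj
      · have hmem := mul_mem (mul_mem u.2 (sJ cs J j j.2).2) (inv_mem u.2)
        exact (hw _ hmem).not_gt hconj.2
      · have := hj.2
        lia
    rw [cs.isRightInversion_simple_iff_isRightDescent,
      cs.not_isRightDescent_iff] at not_isRightInversion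
    rw [not_isRightInversion, ih hu, add_assoc]

theorem IsMinRep.length_mul {w : W} (hw : IsMinRep cs J w) (u : parab cs J) :
    cs.length (w * u) = cs.length w + cs.length (u : W) := by
  obtain ⟨L, rfl, hL⟩ := exists_parabProd_eq u
  rw [hw.length_mul_parabProd hL, hL]

end Parabolic

section TwistedOrbit

/-- The orbit of `x` under the action `u ↦ (x ↦ φ(u) x u⁻¹)` of a subgroup `H` of `G` twisted by a
homomorphism `φ : H →* G`. -/
def twistedOrbit {G : Type*} [Group G] {H : Subgroup G} (φ : H →* G) (x : G) : Set G :=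
  Set.range fun u : H => φ u * x * (u : G)⁻¹

theorem twistedOrbit_eq_of_mem {G : Type*} [Group G] {H : Subgroup G} {φ : H →* G} {x y : G}
    (h : y ∈ twistedOrbit φ x) : twistedOrbit φ y = twistedOrbit φ x := by
  obtain ⟨u, rfl⟩ := h
  have reindex : (fun v : H => φ v * (φ u * x * (u : G)⁻¹) * (v : G)⁻¹) =
      (fun v : H => φ v * x * (v : G)⁻¹) ∘ Equiv.mulRight u := by
    ext v
    simp [mul_assoc]
  exact (congrArg Set.range reindex).trans ((Equiv.mulRight u).surjective.range_comp _)

variable {cs} {J : Set B} {φ : parab cs J →* W} {d : J → B}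

theorem map_parabProd (hd : ∀ j : J, φ (sJ cs J j j.2) = cs.simple (d j)) (L : List J) :
    φ (parabProd cs J L) = cs.wordProd (L.map d) := by
  simp [parabProd, wordProd, map_list_prod, Function.comp_def, hd]

theorem length_map_le (hd : ∀ j : J, φ (sJ cs J j j.2) = cs.simple (d j)) (u : parab cs J) :
    cs.length (φ u) ≤ cs.length (u : W) := by
  obtain ⟨L, rfl, hL⟩ := exists_parabProd_eq u
  rw [map_parabProd hd, hL]
  simpa using cs.length_wordProd_le (L.map d)

theorem IsMinRep.length_le_of_mem_twistedOrbit (hd : ∀ j : J, φ (sJ cs J j j.2) = cs.simple (d j))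
    {w x : W} (hw : IsMinRep cs J w) (hx : x ∈ twistedOrbit φ w) : cs.length w ≤ cs.length x := by
  obtain ⟨u, rfl⟩ := hx
  have hadd : cs.length (w * (u : W)⁻¹) = cs.length w + cs.length (u : W) := by
    simpa using hw.length_mul u⁻¹
  have hle := cs.length_mul_le (φ u)⁻¹ (φ u * w * (u : W)⁻¹)
  rw [mul_assoc, inv_mul_cancel_left, cs.length_inv] at hle
  have hφ := length_map_le hd u
  dsimp only
  rw [mul_assoc]
  lia

theorem IsMinRep.bruhatLE_mul_inv_of_sublist {w : W} (hw : IsMinRep cs J w) {L' L : List J}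
    (hL : cs.length (parabProd cs J L : W) = L.length) (hsub : L'.Sublist L) :
    bruhatLE cs (w * (parabProd cs J L' : W)⁻¹) (w * (parabProd cs J L : W)⁻¹) := by
  have hadd : cs.length (cs.wordProd (L.map Subtype.val) * w⁻¹) =
      (L.map Subtype.val).length + cs.length w⁻¹ := by
    have := hw.length_mul (parabProd cs J L)⁻¹
    rw [← coe_parabProd, ← cs.length_inv, mul_inv_rev, inv_inv, ← Subgroup.coe_inv, this]
    simp [hL, add_comm]
  simpa [coe_parabProd] using
    bruhatLE_inv (bruhatLE_wordProd_mul_of_sublist (hsub.map Subtype.val) hadd)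

theorem IsMinRep.exists_bruhatLE_descendWord
    (hd : ∀ j : J, φ (sJ cs J j j.2) = cs.simple (d j)) {w : W} (hw : IsMinRep cs J w) (L : List J)
    (hL : cs.length (parabProd cs J L : W) = L.length) :
    ∃ y ∈ twistedOrbit φ w, cs.length y ≤ cs.length w ∧
      bruhatLE cs y (descendWord cs (L.map d) (w * (parabProd cs J L : W)⁻¹)) := by
  induction hn : L.length using Nat.strong_induction_on generalizing L with | _ n ih
  obtain ⟨_, hsubMap, hprod, hdesc, hlen⟩ :=
    exists_sublist_descendWord_eq cs (L.map d) (w * (parabProd cs J L : W)⁻¹)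
  obtain ⟨L', hsub, rfl⟩ := List.sublist_map_iff.1 hsubMap
  have hadd : cs.length (w * (parabProd cs J L : W)⁻¹) = cs.length w + L.length := by
    simpa [hL] using hw.length_mul (parabProd cs J L)⁻¹
  rw [← map_parabProd hd] at hprod
  rw [List.length_map] at hlen
  rcases hsub.length_le.eq_or_lt with heq | hlt
  · obtain rfl := hsub.eq_of_length heq
    exact ⟨_, ⟨parabProd cs J L', (mul_assoc _ _ _).trans hprod.symm⟩, by lia, .refl⟩
  · have hL' : cs.length (parabProd cs J L' : W) = L'.length := by
      have hle := length_parabProd_le cs J L'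
      have hφ := length_map_le hd (parabProd cs J L')
      have hge := cs.length_mul_le (φ (parabProd cs J L'))⁻¹
        (φ (parabProd cs J L') * (w * (parabProd cs J L : W)⁻¹))
      rw [inv_mul_cancel_left, cs.length_inv, ← hprod] at hge
      lia
    obtain ⟨y, hy, hylen, hle⟩ := ih _ (hn ▸ hlt) L' hL' rfl
    refine ⟨y, hy, hylen, hle.trans ?_⟩
    rw [← hdesc]
    exact descendWord_mono _ (hw.bruhatLE_mul_inv_of_sublist hL hsub)

theorem IsMinRep.exists_bruhatLE_of_mem_twistedOrbit
    (hd : ∀ j : J, φ (sJ cs J j j.2) = cs.simple (d j)) {w x : W} (hw : IsMinRep cs J w)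
    (hx : x ∈ twistedOrbit φ w) :
    ∃ y ∈ twistedOrbit φ w, cs.length y ≤ cs.length w ∧ bruhatLE cs y x := by
  obtain ⟨u, rfl⟩ := hx
  obtain ⟨L, rfl, hL⟩ := exists_parabProd_eq u
  obtain ⟨y, hy, hlen, hle⟩ := hw.exists_bruhatLE_descendWord hd L hL
  have hLx := descendWord_bruhatLE_wordProd_mul cs (L.map d) (w * (parabProd cs J L : W)⁻¹)
  rw [← map_parabProd hd, ← mul_assoc] at hLx
  exact ⟨y, hy, hlen, hle.trans hLx⟩

end TwistedOrbit

theorem orbitOf_eq_twistedOrbit (J J' : Set B) (δ : parab cs J ≃* parab cs J') (x : W) :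
    orbitOf cs J J' δ x = twistedOrbit ((parab cs J').subtype.comp δ.toMonoidHom) x := by
  ext y
  simp [orbitOf, orbSet, twistedOrbit, eq_comm]

variable {cs} in
theorem stmt8_general {J : Set B} {φ : parab cs J →* W}
    (hφ : ∀ j, ∀ hj : j ∈ J, ∃ i, φ (sJ cs J j hj) = cs.simple i) {z : W}
    (hz : ∃ x ∈ twistedOrbit φ z, IsMinRep cs J x) {v : W} (hv : v ∈ twistedOrbit φ z) :
    (¬ ∃ v' ∈ twistedOrbit φ z, bruhatLE cs v' v ∧ v' ≠ v) ↔
      ∀ v' ∈ twistedOrbit φ z, cs.length v ≤ cs.length v' := by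
  obtain ⟨w, hwz, hw⟩ := hz
  choose d hd using fun j : J => hφ j j.2
  rw [← twistedOrbit_eq_of_mem hwz] at hv ⊢
  constructor
  · intro hmin v' hv'
    obtain ⟨y, hy, hyw, hyv⟩ := hw.exists_bruhatLE_of_mem_twistedOrbit hd hv
    obtain rfl : y = v := by_contra fun hne => hmin ⟨y, hy, hyv, hne⟩
    exact hyw.trans (hw.length_le_of_mem_twistedOrbit hd hv')
  · rintro hmin ⟨v', hv', hle, hne⟩
    exact (hmin v' hv').not_gt ((eq_or_length_lt_of_bruhatLE hle).resolve_left hne)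

end

/-- Let `O` be a `δ`-twisted `W_J`-conjugacy class containing
an element of `W^J`, and let `v ∈ O`. Then `v` is minimal in `O` for the
Bruhat order iff `v` is of minimal length in `O`. -/
theorem stmt8 (hδ : MapsSimples cs J J' δ) (z : W)
    (hz : ∃ x ∈ orbitOf cs J J' δ z, IsMinRep cs J x)
    (v : W) (hv : v ∈ orbitOf cs J J' δ z) :
    (¬ ∃ v' ∈ orbitOf cs J J' δ z, bruhatLE cs v' v ∧ v' ≠ v) ↔
      (∀ v' ∈ orbitOf cs J J' δ z, cs.length v ≤ cs.length v') := by
  simp only [orbitOf_eq_twistedOrbit] at hz hv ⊢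
  exact stmt8_general (fun j hj => (hδ.1 j hj).imp fun _ => And.right) hz hv

end PartialConjugation
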